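/- (Pythagorean theorem for the Cramér projection) Let z₁ < z₂ < ⋯ < z_K be real numbers with K ≥ 2 and let Π_C be the associated Cramér projection. Let μ be a probability measure supported on [z₁, z_K] and let ν be a probability measure supported on {z₁,…,z_K}. Then ℓ₂²(μ, ν) = ℓ₂²(μ, Π_C μ) + ℓ₂²(Π_C μ, ν). -/

import Mathlib

open MeasureTheory Filter Set

noncomputable section

/-- The cumulative distribution function of a measure on ℝ. -/
def cdfFn (ν : Measure ℝ) (y : ℝ) : ℝ := (ν (Set.Iic y)).toReal

/-- The Cramér distance `ℓ₂` between two measures on ℝ. -/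
def cramerDist (ν₁ ν₂ : Measure ℝ) : ℝ :=
  Real.sqrt (∫ x, (cdfFn ν₁ x - cdfFn ν₂ x) ^ 2)

/-- The hat functions associated with the grid `z 0 < z 1 < ⋯ < z (K-1)`. -/
def hatFn (K : ℕ) (z : ℕ → ℝ) (i : ℕ) (x : ℝ) : ℝ :=
  if i = 0 ∧ x ≤ z 0 then 1
  else if i = K - 1 ∧ z (K - 1) ≤ x then 1
  else if i + 1 < K ∧ z i ≤ x ∧ x ≤ z (i + 1) then (z (i + 1) - x) / (z (i + 1) - z i)
  else if 0 < i ∧ z (i - 1) ≤ x ∧ x ≤ z i then (x - z (i - 1)) / (z i - z (i - 1))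
  else 0

/-- The Cramér projection onto the grid `z 0 < z 1 < ⋯ < z (K-1)`. -/
def cramerProj (K : ℕ) (z : ℕ → ℝ) (ν : Measure ℝ) : Measure ℝ :=
  ∑ i ∈ Finset.range K, (ENNReal.ofReal (∫ w, hatFn K z i w ∂ν)) • Measure.dirac (z i)

/-- The distributional Bellman operator. -/
def bellmanOp {X A : Type} [Fintype X] [Fintype A] [MeasurableSpace X] [MeasurableSpace A]
    (γ : ℝ) (p : X × A → Measure (ℝ × X)) (pol : X → Measure A)
    (η : X × A → Measure ℝ) (xa : X × A) : Measure ℝ :=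
  (p xa).bind (fun rx' => ∑ a' : A, (pol rx'.2 {a'}) • (η (rx'.2, a')).map (fun t => rx'.1 + γ * t))

/-- The supremum-Cramér metric between return distribution functions. -/
def supCramer {X A : Type} [Fintype X] [Fintype A] (η μ : X × A → Measure ℝ) : ℝ :=
  ⨆ xa : X × A, cramerDist (η xa) (μ xa)

/-- Square-integrable tails of the CDF. -/
def sqIntTails (ν : Measure ℝ) : Prop :=
  IntegrableOn (fun x => (cdfFn ν x) ^ 2) (Set.Iic 0) ∧
  IntegrableOn (fun x => (1 - cdfFn ν x) ^ 2) (Set.Ici 0)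

theorem z_mono {K : ℕ} {z : ℕ → ℝ} (hz : ∀ i, i + 1 < K → z i < z (i + 1)) :
    ∀ j, j < K → ∀ i, i ≤ j → z i ≤ z j := by
  intro j
  induction j with
  | zero => intro _ i hi; simp [Nat.le_zero.mp hi]
  | succ n ih =>
    intro hn i hi
    rcases Nat.lt_or_ge n i with h | h
    · have : i = n + 1 := by omega
      rw [this]
    · exact (ih (by omega) i h).trans (hz n hn).le

def TT (K : ℕ) (z : ℕ → ℝ) (j : ℕ) (w : ℝ) : ℝ :=
  if j + 1 < K then max 0 (min 1 ((z (j + 1) - w) / (z (j + 1) - z j))) else 1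

theorem TT_meas (K : ℕ) (z : ℕ → ℝ) (j : ℕ) : Measurable (TT K z j) := by
  unfold TT
  split_ifs
  · fun_prop
  · fun_prop

theorem TT_int (K : ℕ) (z : ℕ → ℝ) (j : ℕ) (μ : Measure ℝ) [IsFiniteMeasure μ] :
    Integrable (TT K z j) μ := by
  refine Integrable.of_bound (TT_meas K z j).aestronglyMeasurable 1 (ae_of_all _ fun w => ?_)
  unfold TT
  split_ifs
  · rw [Real.norm_eq_abs, abs_of_nonneg (le_max_left _ _)]
    exact max_le zero_le_one (min_le_left _ _)
  · simp

theorem TT_lo {K : ℕ} {z : ℕ → ℝ} {j : ℕ} {w : ℝ} (h : j + 1 < K) (hz : z j < z (j + 1))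
    (hw : w ≤ z j) : TT K z j w = 1 := by
  unfold TT
  rw [if_pos h, min_eq_left, max_eq_right zero_le_one]
  rw [le_div_iff₀ (by linarith)]; linarith

theorem TT_hi {K : ℕ} {z : ℕ → ℝ} {j : ℕ} {w : ℝ} (h : j + 1 < K) (hz : z j < z (j + 1))
    (hw : z (j + 1) ≤ w) : TT K z j w = 0 := by
  unfold TT
  rw [if_pos h, max_eq_left]
  exact (min_le_right _ _).trans (div_nonpos_of_nonpos_of_nonneg (by linarith) (by linarith))

theorem TT_mid {K : ℕ} {z : ℕ → ℝ} {j : ℕ} {w : ℝ} (h : j + 1 < K) (hz : z j < z (j + 1))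
    (hw : z j ≤ w) (hw' : w ≤ z (j + 1)) :
    TT K z j w = (z (j + 1) - w) / (z (j + 1) - z j) := by
  unfold TT
  rw [if_pos h, min_eq_right, max_eq_right]
  · exact div_nonneg (by linarith) (by linarith)
  · rw [div_le_one (by linarith)]; linarith

theorem hat_zero {K : ℕ} (hK : 2 ≤ K) {z : ℕ → ℝ} (hz : ∀ i, i + 1 < K → z i < z (i + 1)) (w : ℝ) :
    hatFn K z 0 w = TT K z 0 w := by
  have h1 : 0 + 1 < K := by omega
  have h01 := hz 0 h1
  have hne : ¬ (0 = K - 1) := by omega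
  unfold hatFn
  rcases le_total w (z 0) with h | h
  · rw [TT_lo h1 h01 h]; simp [h]
  · rcases le_or_gt w (z 1) with h' | h'
    · rw [TT_mid h1 h01 h h']
      by_cases h0 : w ≤ z 0
      · have : w = z 0 := le_antisymm h0 h
        subst this
        simp
        rw [div_self]; simp at h01; linarith
      · have : 1 < K := by omega
        simp [h0, hne, h, h', this]
    · rw [TT_hi h1 h01 h'.le]
      have h0 : ¬ w ≤ z 0 := by simp at h01; linarith
      simp [h0, hne, not_le.mpr h']

theorem hat_succ {K : ℕ} {z : ℕ → ℝ} (hz : ∀ i, i + 1 < K → z i < z (i + 1))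
    (j : ℕ) (hj : j + 1 < K) (w : ℝ) :
    hatFn K z (j + 1) w = TT K z (j + 1) w - TT K z j w := by
  have hjz := hz j hj
  unfold hatFn
  rw [if_neg (by simp)]
  by_cases hl : j + 1 + 1 < K
  · have hjz' := hz _ hl
    rw [if_neg (by rintro ⟨h, -⟩; omega)]
    simp only [hl, true_and, Nat.add_sub_cancel, Nat.succ_pos, Nat.zero_lt_succ]
    split_ifs with h1 h2
    · rw [TT_mid hl hjz' h1.1 h1.2, TT_hi hj hjz h1.1]; ring
    · rw [TT_mid hj hjz h2.1 h2.2, TT_lo hl hjz' h2.2]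
      have : z (j+1) - z j ≠ 0 := sub_ne_zero.mpr hjz.ne'
      field_simp
      ring
    · rcases lt_or_ge w (z j) with h | h
      · rw [TT_lo hj hjz h.le, TT_lo hl hjz' (by linarith)]; ring
      · have h3 : z (j+1) < w := by
          by_contra h'; exact h2 ⟨h, not_lt.mp h'⟩
        have h4 : z (j+1+1) < w := by
          by_contra h'; exact h1 ⟨h3.le, not_lt.mp h'⟩
        rw [TT_hi hj hjz h3.le, TT_hi hl hjz' h4.le]; ring
  · have hk : K - 1 = j + 1 := by omega
    have hT : TT K z (j+1) w = 1 := by unfold TT; rw [if_neg hl]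
    rw [hT, hk]
    simp only [hl, true_and, false_and, if_false, Nat.add_sub_cancel, Nat.zero_lt_succ]
    split_ifs with h1 h2
    · rw [TT_hi hj hjz h1]; ring
    · rw [TT_mid hj hjz h2.1 h2.2]
      have : z (j+1) - z j ≠ 0 := sub_ne_zero.mpr hjz.ne'
      field_simp
      ring
    · have : w < z j := by
        by_contra h'; exact h2 ⟨not_lt.mp h', (not_le.mp h1).le⟩
      rw [TT_lo hj hjz this.le]; ring

theorem hat_nonneg {K : ℕ} {z : ℕ → ℝ} (hz : ∀ i, i + 1 < K → z i < z (i + 1))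
    (i : ℕ) (hi : i < K) (w : ℝ) : 0 ≤ hatFn K z i w := by
  unfold hatFn
  split_ifs with h1 h2 h3 h4
  · exact zero_le_one
  · exact zero_le_one
  · exact div_nonneg (by linarith [h3.2.2]) (by linarith [hz i h3.1])
  · have := hz (i - 1) (by omega)
    rw [Nat.sub_add_cancel h4.1] at this
    exact div_nonneg (by linarith [h4.2.1]) (by linarith)
  · exact le_rfl

theorem sum_hat {K : ℕ} (hK : 2 ≤ K) {z : ℕ → ℝ} (hz : ∀ i, i + 1 < K → z i < z (i + 1))
    (μ : Measure ℝ) [IsFiniteMeasure μ] (j : ℕ) (hj : j < K) :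
    ∑ i ∈ Finset.range (j + 1), ∫ w, hatFn K z i w ∂μ = ∫ w, TT K z j w ∂μ := by
  induction j with
  | zero => simp [hat_zero hK hz]
  | succ n ih =>
    rw [Finset.sum_range_succ, ih (by omega)]
    simp_rw [hat_succ hz n hj]
    rw [integral_sub (TT_int _ _ _ _) (TT_int _ _ _ _)]; ring

theorem cdf_proj {K : ℕ} {z : ℕ → ℝ} (hz : ∀ i, i + 1 < K → z i < z (i + 1))
    (μ : Measure ℝ) (y : ℝ) :
    cdfFn (cramerProj K z μ) y
      = ∑ i ∈ Finset.range K, if z i ≤ y then ∫ w, hatFn K z i w ∂μ else 0 := by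
  unfold cdfFn cramerProj
  rw [Measure.finsetSum_apply, ENNReal.toReal_sum]
  · refine Finset.sum_congr rfl fun i hi => ?_
    have h0 : 0 ≤ ∫ w, hatFn K z i w ∂μ :=
      integral_nonneg (hat_nonneg hz i (Finset.mem_range.mp hi))
    by_cases h : z i ≤ y <;> simp [h, Measure.dirac_apply, h0]
  · intro i hi
    rw [Measure.smul_apply, smul_eq_mul]
    exact ENNReal.mul_ne_top ENNReal.ofReal_ne_top (measure_ne_top _ _)

theorem cdf_proj_mid {K : ℕ} (hK : 2 ≤ K) {z : ℕ → ℝ} (hz : ∀ i, i + 1 < K → z i < z (i + 1))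
    (μ : Measure ℝ) [IsFiniteMeasure μ] (j : ℕ) (hj : j < K) (y : ℝ) (h1 : z j ≤ y)
    (h2 : j + 1 < K → y < z (j + 1)) :
    cdfFn (cramerProj K z μ) y = ∫ w, TT K z j w ∂μ := by
  rw [cdf_proj hz, ← sum_hat hK hz μ j hj, ← Finset.sum_filter]
  refine Finset.sum_congr ?_ fun _ _ => rfl
  ext i
  simp only [Finset.mem_filter, Finset.mem_range]
  constructor
  · rintro ⟨hi, hy⟩
    by_contra h
    have := z_mono hz i hi (j+1) (by omega)
    linarith [h2 (by omega)]
  · intro h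
    exact ⟨by omega, (z_mono hz j hj i (by omega)).trans h1⟩

theorem cdf_proj_lo {K : ℕ} {z : ℕ → ℝ} (hz : ∀ i, i + 1 < K → z i < z (i + 1))
    (μ : Measure ℝ) (y : ℝ) (h : y < z 0) : cdfFn (cramerProj K z μ) y = 0 := by
  rw [cdf_proj hz]
  refine Finset.sum_eq_zero fun i hi => if_neg ?_
  have := z_mono hz i (Finset.mem_range.mp hi) 0 (by omega)
  linarith

theorem cdf_eq_of_ae {ν : Measure ℝ} {s : Set ℝ} (hs : ν sᶜ = 0) {x y : ℝ}
    (h : ∀ w ∈ s, w ≤ x ↔ w ≤ y) : cdfFn ν x = cdfFn ν y := by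
  unfold cdfFn
  congr 1
  apply measure_congr
  have : ∀ᵐ w ∂ν, w ∈ s := hs
  filter_upwards [this] with w hw
  exact propext (h w hw)

theorem cdf_zero_of_ae {ν : Measure ℝ} {s : Set ℝ} (hs : ν sᶜ = 0) {x : ℝ}
    (h : ∀ w ∈ s, x < w) : cdfFn ν x = 0 := by
  unfold cdfFn
  rw [measure_mono_null _ hs]; · simp
  intro w hw hws
  exact absurd (h w hws) (not_lt.mpr hw)

theorem cdf_one_of_ae {ν : Measure ℝ} [IsProbabilityMeasure ν] {s : Set ℝ} (hs : ν sᶜ = 0) {x : ℝ}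
    (h : ∀ w ∈ s, w ≤ x) : cdfFn ν x = 1 := by
  unfold cdfFn
  have : ∀ᵐ w ∂ν, w ∈ Iic x := by
    have : ∀ᵐ w ∂ν, w ∈ s := hs
    filter_upwards [this] with w hw
    exact h w hw
  rw [(prob_compl_eq_zero_iff measurableSet_Iic).mp this]; simp

theorem cdf_mono (ν : Measure ℝ) [IsFiniteMeasure ν] : Monotone (cdfFn ν) := by
  intro x y h
  exact ENNReal.toReal_mono (measure_ne_top _ _) (measure_mono (Iic_subset_Iic.mpr h))

theorem cdf_nonneg (ν : Measure ℝ) (x : ℝ) : 0 ≤ cdfFn ν x := ENNReal.toReal_nonneg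

theorem diff_int (μ ν : Measure ℝ) [IsFiniteMeasure μ] [IsFiniteMeasure ν] (a b : ℝ) :
    IntervalIntegrable (fun x => (cdfFn μ x - cdfFn ν x) ^ 2) volume a b := by
  have key : ∀ (μ ν : Measure ℝ) [IsFiniteMeasure μ] [IsFiniteMeasure ν],
      IntervalIntegrable (fun x => cdfFn μ x * cdfFn ν x) volume a b := by
    intro μ ν _ _
    apply Monotone.intervalIntegrable
    intro x y h
    exact mul_le_mul (cdf_mono μ h) (cdf_mono ν h) (cdf_nonneg _ _) (cdf_nonneg _ _)
  have := ((key μ μ).sub ((key μ ν).const_mul 2)).add (key ν ν)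
  convert this using 1
  ext x
  ring

theorem fub (μ : Measure ℝ) [IsFiniteMeasure μ] (a b : ℝ) (hab : a ≤ b) :
    ∫ x in a..b, cdfFn μ x = ∫ w, max 0 (min (b - a) (b - w)) ∂μ := by
  rw [intervalIntegral.integral_of_le hab]
  have h1 : ∀ x, cdfFn μ x = ∫ w, (if w ≤ x then (1:ℝ) else 0) ∂μ := by
    intro x
    have : (fun w => if w ≤ x then (1:ℝ) else 0) = (Iic x).indicator 1 := by
      ext w; simp [indicator]
    rw [this, integral_indicator_one measurableSet_Iic]; rfl
  simp_rw [h1]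
  rw [integral_integral_swap]
  · congr 1
    ext w
    have : (fun x => if w ≤ x then (1:ℝ) else 0) = (Ici w).indicator 1 := by
      ext w; simp [indicator]
    rw [this, integral_indicator_one measurableSet_Ici, measureReal_restrict_apply measurableSet_Ici]
    rcases le_or_gt w a with h | h
    · have : Ici w ∩ Ioc a b = Ioc a b := by
        ext x; simp; intros; linarith
      rw [this, Real.volume_real_Ioc, min_eq_left (by linarith), max_comm]
    · have : Ici w ∩ Ioc a b = Icc w b := by
        ext x; simp; intros; linarith
      rw [this, Real.volume_real_Icc, min_eq_right (by linarith), max_comm]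
  · refine Integrable.of_bound (C := 1) (Measurable.aestronglyMeasurable ?_) (ae_of_all _ fun p => ?_)
    · exact Measurable.ite (measurableSet_le measurable_snd measurable_fst) measurable_const measurable_const
    · simp only [Function.uncurry]; split_ifs <;> simp

theorem fub_TT {K : ℕ} {z : ℕ → ℝ} (hz : ∀ i, i + 1 < K → z i < z (i + 1))
    (μ : Measure ℝ) [IsFiniteMeasure μ] (j : ℕ) (hj : j + 1 < K) :
    ∫ x in z j..z (j+1), cdfFn μ x = (z (j+1) - z j) * ∫ w, TT K z j w ∂μ := by
  have h := hz j hj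
  rw [fub μ _ _ h.le, ← integral_const_mul]
  congr 1
  ext w
  unfold TT
  have h' : 0 < z (j+1) - z j := by linarith
  rw [if_pos hj, mul_max_of_nonneg _ _ h'.le, mul_min_of_nonneg _ _ h'.le, mul_div_cancel₀ _ h'.ne']
  simp

theorem total {K : ℕ} (hK : 2 ≤ K) {z : ℕ → ℝ} (hz : ∀ i, i + 1 < K → z i < z (i + 1))
    (D : ℝ → ℝ) (hD : ∀ a b, IntervalIntegrable D volume a b)
    (h0 : ∀ x, x < z 0 → D x = 0) (h1 : ∀ x, z (K-1) ≤ x → D x = 0) :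
    ∫ x, D x = ∑ j ∈ Finset.range (K-1), ∫ x in z j..z (j+1), D x := by
  rw [intervalIntegral.sum_integral_adjacent_intervals (fun _ _ => hD _ _),
    intervalIntegral.integral_of_le (z_mono hz (K-1) (by omega) 0 (by omega)),
    ← integral_Icc_eq_integral_Ioc, setIntegral_eq_integral_of_forall_compl_eq_zero]
  intro x hx
  rcases lt_or_ge x (z 0) with h | h
  · exact h0 x h
  · refine h1 x (le_of_lt ?_)
    by_contra h'
    exact hx ⟨h, not_lt.mp h'⟩

/-- Pythagorean theorem for the Cramér projection. -/
theorem cramerProj_pythagorean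
    (K : ℕ) (hK : 2 ≤ K) (z : ℕ → ℝ) (hz : ∀ i, i + 1 < K → z i < z (i + 1))
    (μ : Measure ℝ) [IsProbabilityMeasure μ] (hμ : μ (Set.Icc (z 0) (z (K - 1)))ᶜ = 0)
    (ν : Measure ℝ) [IsProbabilityMeasure ν] (hν : ν {w | ∃ i < K, w = z i}ᶜ = 0) :
    (cramerDist μ ν) ^ 2 = (cramerDist μ (cramerProj K z μ)) ^ 2
      + (cramerDist (cramerProj K z μ) ν) ^ 2 := by
  have hfin : IsFiniteMeasure (cramerProj K z μ) := by
    refine ⟨?_⟩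
    unfold cramerProj
    rw [Measure.finsetSum_apply]
    refine ENNReal.sum_lt_top.mpr fun i _ => ?_
    rw [Measure.smul_apply, smul_eq_mul]
    exact ENNReal.mul_lt_top ENNReal.ofReal_lt_top (measure_lt_top _ _)
  have hs : ∀ ν₁ ν₂ : Measure ℝ,
      (cramerDist ν₁ ν₂) ^ 2 = ∫ x, (cdfFn ν₁ x - cdfFn ν₂ x) ^ 2 := fun ν₁ ν₂ =>
    Real.sq_sqrt (integral_nonneg fun x => sq_nonneg _)
  have hm := z_mono hz
  have hμ0 : ∀ x, x < z 0 → cdfFn μ x = 0 := fun x hx =>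
    cdf_zero_of_ae hμ fun w hw => hx.trans_le hw.1
  have hμ1 : ∀ x, z (K-1) ≤ x → cdfFn μ x = 1 := fun x hx =>
    cdf_one_of_ae hμ fun w hw => hw.2.trans hx
  have hν0 : ∀ x, x < z 0 → cdfFn ν x = 0 := fun x hx =>
    cdf_zero_of_ae hν (by rintro w ⟨i, hi, rfl⟩; exact hx.trans_le (hm i hi 0 (by omega)))
  have hν1 : ∀ x, z (K-1) ≤ x → cdfFn ν x = 1 := fun x hx =>
    cdf_one_of_ae hν (by rintro w ⟨i, hi, rfl⟩; exact (hm (K-1) (by omega) i (by omega)).trans hx)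
  have hp0 := cdf_proj_lo hz μ
  have hp1 : ∀ x, z (K-1) ≤ x → cdfFn (cramerProj K z μ) x = 1 := by
    intro x hx
    rw [cdf_proj_mid hK hz μ (K-1) (by omega) x hx (by omega)]
    have : TT K z (K-1) = fun _ => 1 := by
      ext w; unfold TT; rw [if_neg (by omega)]
    rw [this]; simp
  rw [hs, hs, hs,
    total hK hz _ (diff_int μ ν) (fun x hx => by simp [hμ0 x hx, hν0 x hx])
      (fun x hx => by simp [hμ1 x hx, hν1 x hx]),
    total hK hz _ (diff_int μ (cramerProj K z μ)) (fun x hx => by simp [hμ0 x hx, hp0 x hx])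
      (fun x hx => by simp [hμ1 x hx, hp1 x hx]),
    total hK hz _ (diff_int (cramerProj K z μ) ν) (fun x hx => by simp [hp0 x hx, hν0 x hx])
      (fun x hx => by simp [hp1 x hx, hν1 x hx]), ← Finset.sum_add_distrib]
  refine Finset.sum_congr rfl fun j hj => ?_
  have hj' : j + 1 < K := by have := Finset.mem_range.mp hj; omega
  have hjz := hz j hj'
  have hF := fub_TT hz μ j hj'
  set g := ∫ w, TT K z j w ∂μ with hg
  set h := cdfFn ν (z j) with hh
  have hFi : IntervalIntegrable (cdfFn μ) volume (z j) (z (j+1)) :=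
    (cdf_mono μ).intervalIntegrable
  rw [← intervalIntegral.integral_add (diff_int _ _ _ _) (diff_int _ _ _ _), ← sub_eq_zero,
    ← intervalIntegral.integral_sub (diff_int _ _ _ _) ((diff_int _ _ _ _).add (diff_int _ _ _ _))]
  have hc : ∫ x in z j..z (j+1), (2 * (g - h)) * (cdfFn μ x - g) = 0 := by
    rw [intervalIntegral.integral_const_mul, intervalIntegral.integral_sub hFi (by simp), hF]
    simp
  rw [← hc]
  apply intervalIntegral.integral_congr_ae
  have hne : ∀ᵐ x : ℝ, x ≠ z (j+1) := Measure.ae_ne volume _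
  filter_upwards [hne] with x hx hx'
  rw [uIoc_of_le hjz.le] at hx'
  have hlt : x < z (j+1) := lt_of_le_of_ne hx'.2 hx
  have e1 : cdfFn (cramerProj K z μ) x = g :=
    cdf_proj_mid hK hz μ j (by omega) x hx'.1.le (fun _ => hlt)
  have e2 : cdfFn ν x = h := by
    refine cdf_eq_of_ae hν ?_
    rintro w ⟨i, hi, rfl⟩
    constructor
    · intro hw
      refine hm j (by omega) i ?_
      by_contra hc
      have := hm i hi (j+1) (by omega)
      linarith
    · intro hw; linarith [hx'.1]
  rw [e1, e2]
  ring

end
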